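/- arXiv:1407.0139 — 4 statements merged into one kernel-verified Lean document; each statement's English description precedes it below -/
import Mathlib

section
/- Let G be a finite connected bridgeless simple graph with edge set E, and let S ⊆ E with |S| ≥ 2. Then S is a pairwise-disconnecting set of G if and only if the graph obtained from G by deleting all edges of S has exactly |S| connected components. -/
open LaurentPolynomial Finset

/-- `S` is a pairwise-disconnecting set of `G`: a set of at least two edges of `G` such that
deleting any two distinct edges of `S` disconnects the graph. -/
def IsPDSet {V : Type*} (G : SimpleGraph V) (S : Finset (Sym2 V)) : Prop :=
  ↑S ⊆ G.edgeSet ∧ 2 ≤ S.card ∧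
    ∀ e ∈ S, ∀ f ∈ S, e ≠ f → ¬ (G.deleteEdges {e, f}).Connected

/-- A pairwise-disconnecting set is maximal if no pairwise-disconnecting set contains it
as a proper subset. -/
def IsMaxPDSet {V : Type*} (G : SimpleGraph V) (S : Finset (Sym2 V)) : Prop :=
  IsPDSet G S ∧ ∀ S' : Finset (Sym2 V), IsPDSet G S' → S ⊆ S' → S' = S

/-
Deleting one edge from a graph raises the number of connected components by at most one, and by
exactly one when the edge is a bridge. Bridges remain bridges after further deletions, so if `H` is
connected then `H - T` has exactly `|T| + 1` components if and only if all edges of `T` are bridges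
of `H`. For a non-bridge `e ∈ S`, apply this to the connected graph `H = G - e` and `T = S \ {e}`:
the other edges of `S` are all bridges of `G - e` if and only if `G - S` has `|S|` components.
-/

/-- The number of connected components of `G`, valued in `ℕ∞` so that infinitely many components
count as `⊤` rather than as the junk value `0` of `Nat.card`. -/
noncomputable def componentCount {V : Type*} (G : SimpleGraph V) : ℕ∞ :=
  ENat.card G.ConnectedComponent

section ComponentCount

open SimpleGraph

variable {V : Type*} {G : SimpleGraph V} {u v x y : V} {e : Sym2 V} {S T : Finset (Sym2 V)}

theorem componentCount_eq_natCast_iff {n : ℕ} (hn : n ≠ 0) :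
    componentCount G = n ↔ Nat.card G.ConnectedComponent = n :=
  (ENat.toNat_eq_iff hn).symm

theorem componentCount_eq_one (hG : G.Connected) : componentCount G = 1 := by
  have := hG.nonempty
  have := hG.preconnected.subsingleton_connectedComponent
  exact le_antisymm ENat.card_le_one ((ENat.one_le_card_iff_nonempty _).mpr inferInstance)

theorem reachable_endpoint_of_not_reachable_deleteEdges (hxy : G.Reachable x y)
    (hdel : ¬ (G.deleteEdges {s(u, v)}).Reachable x y) :
    (G.deleteEdges {s(u, v)}).Reachable x u ∨ (G.deleteEdges {s(u, v)}).Reachable x v := by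
  obtain ⟨p⟩ := hxy
  induction p with
  | nil => exact absurd .rfl hdel
  | @cons a b c hab _ ih =>
    by_cases he : s(a, b) = s(u, v)
    · rcases Sym2.eq_iff.mp he with ⟨rfl, -⟩ | ⟨rfl, -⟩
      · exact .inl .rfl
      · exact .inr .rfl
    · have hr : (G.deleteEdges {s(u, v)}).Reachable a b := (deleteEdges_adj.mpr ⟨hab, he⟩).reachable
      exact (ih fun hbc ↦ hdel (hr.trans hbc)).imp hr.trans hr.trans

theorem injOn_map_deleteEdges_singleton (G : SimpleGraph V) (u v : V) :
    Set.InjOn (ConnectedComponent.map (Hom.ofLE (G.deleteEdges_le {s(u, v)})))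
      {c | c ≠ (G.deleteEdges {s(u, v)}).connectedComponentMk u} := by
  intro c hc d hd hcd
  induction c, d using ConnectedComponent.ind₂ with | h x y
  simp only [Set.mem_ofPred_eq, ne_eq, ConnectedComponent.eq] at hc hd
  have hxy : G.Reachable x y := ConnectedComponent.eq.mp hcd
  refine ConnectedComponent.eq.mpr (by_contra fun hdel ↦ hdel ?_)
  have hxv := (reachable_endpoint_of_not_reachable_deleteEdges hxy hdel).resolve_left hc
  have hyv := (reachable_endpoint_of_not_reachable_deleteEdges hxy.symm
    (hdel ·.symm)).resolve_left hd
  exact hxv.trans hyv.symm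

theorem surjOn_map_deleteEdges_singleton (huv : G.Adj u v) (hb : G.IsBridge s(u, v)) :
    Set.SurjOn (ConnectedComponent.map (Hom.ofLE (G.deleteEdges_le {s(u, v)})))
      {c | c ≠ (G.deleteEdges {s(u, v)}).connectedComponentMk u} Set.univ := by
  rintro d -
  obtain ⟨c, rfl⟩ := ConnectedComponent.surjective_map_ofLE (G.deleteEdges_le {s(u, v)}) d
  by_cases hc : c = connectedComponentMk _ u
  · subst hc
    exact ⟨connectedComponentMk _ v, fun h ↦ isBridge_iff.mp hb (ConnectedComponent.eq.mp h.symm),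
      ConnectedComponent.eq.mpr huv.symm.reachable⟩
  · exact ⟨c, hc, rfl⟩

theorem componentCount_deleteEdges_singleton_le (G : SimpleGraph V) (e : Sym2 V) :
    componentCount (G.deleteEdges {e}) ≤ componentCount G + 1 := by
  induction e with | h u v
  rw [componentCount, ← Set.encard_ne_add_one (connectedComponentMk _ u),
    ← (injOn_map_deleteEdges_singleton G u v).encard_image]
  gcongr
  exact Set.encard_le_card

theorem componentCount_deleteEdges_singleton_of_isBridge (he : e ∈ G.edgeSet)
    (hb : G.IsBridge e) : componentCount (G.deleteEdges {e}) = componentCount G + 1 := by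
  induction e with | h u v
  rw [componentCount, ← Set.encard_ne_add_one (connectedComponentMk _ u),
    ← (injOn_map_deleteEdges_singleton G u v).encard_image,
    Set.univ_subset_iff.mp (surjOn_map_deleteEdges_singleton he hb), Set.encard_univ,
    componentCount]

theorem deleteEdges_cons (G : SimpleGraph V) (he : e ∉ T) :
    G.deleteEdges ↑(T.cons e he) = (G.deleteEdges ↑T).deleteEdges {e} := by
  rw [deleteEdges_deleteEdges, Finset.coe_cons, Set.union_singleton]

theorem deleteEdges_singleton_deleteEdges_erase [DecidableEq V] (G : SimpleGraph V) (he : e ∈ S) :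
    (G.deleteEdges {e}).deleteEdges ↑(S.erase e) = G.deleteEdges ↑S := by
  rw [deleteEdges_deleteEdges, Set.singleton_union, ← Finset.coe_insert, Finset.insert_erase he]

theorem componentCount_deleteEdges_le (G : SimpleGraph V) (T : Finset (Sym2 V)) :
    componentCount (G.deleteEdges T) ≤ componentCount G + T.card := by
  induction T using Finset.cons_induction with
  | empty => simp
  | cons e T he ih =>
    calc componentCount (G.deleteEdges (T.cons e he))
        = componentCount ((G.deleteEdges T).deleteEdges {e}) := by rw [deleteEdges_cons]
      _ ≤ componentCount (G.deleteEdges T) + 1 := componentCount_deleteEdges_singleton_le _ e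
      _ ≤ componentCount G + T.card + 1 := by gcongr
      _ = componentCount G + (T.cons e he).card := by
          rw [Finset.card_cons, Nat.cast_succ, add_assoc]

theorem componentCount_deleteEdges_of_forall_isBridge (hT : ↑T ⊆ G.edgeSet)
    (hb : ∀ e ∈ T, G.IsBridge e) :
    componentCount (G.deleteEdges T) = componentCount G + T.card := by
  induction T using Finset.cons_induction with
  | empty => simp
  | cons e T he ih =>
    rw [Finset.coe_cons, Set.insert_subset_iff] at hT
    rw [Finset.forall_mem_cons] at hb
    have he' : e ∈ (G.deleteEdges T).edgeSet := by
      rw [edgeSet_deleteEdges]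
      exact ⟨hT.1, he⟩
    calc componentCount (G.deleteEdges (T.cons e he))
        = componentCount ((G.deleteEdges T).deleteEdges {e}) := by rw [deleteEdges_cons]
      _ = componentCount (G.deleteEdges T) + 1 :=
          componentCount_deleteEdges_singleton_of_isBridge he' (hb.1.anti (deleteEdges_le _))
      _ = componentCount G + T.card + 1 := by rw [ih hT.2 hb.2]
      _ = componentCount G + (T.cons e he).card := by
          rw [Finset.card_cons, Nat.cast_succ, add_assoc]

theorem connected_deleteEdges_singleton_iff (hG : G.Connected) :
    (G.deleteEdges {e}).Connected ↔ ¬ G.IsBridge e := by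
  induction e with | h u v
  exact ⟨fun h hb ↦ isBridge_iff.mp hb (h.preconnected u v),
    hG.connected_delete_edge_of_not_isBridge⟩

theorem componentCount_deleteEdges_eq_card_add_one_iff (hG : G.Connected) (hT : ↑T ⊆ G.edgeSet) :
    componentCount (G.deleteEdges T) = T.card + 1 ↔ ∀ e ∈ T, G.IsBridge e := by
  classical
  refine ⟨fun hcard e he ↦ by_contra fun hb ↦ ?_, fun hb ↦ ?_⟩
  · have hconn := (connected_deleteEdges_singleton_iff hG).mpr hb
    have hle := componentCount_deleteEdges_le (G.deleteEdges {e}) (T.erase e)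
    rw [deleteEdges_singleton_deleteEdges_erase G he, componentCount_eq_one hconn, hcard,
      ← Finset.card_erase_add_one he] at hle
    norm_cast at hle
    lia
  · rw [componentCount_deleteEdges_of_forall_isBridge hT hb, componentCount_eq_one hG, add_comm]

theorem componentCount_deleteEdges_eq_card_iff (hG : G.Connected) (hS : ↑S ⊆ G.edgeSet)
    (he : e ∈ S) (hb : ¬ G.IsBridge e) :
    componentCount (G.deleteEdges S) = S.card ↔
      ∀ f ∈ S, e ≠ f → ¬ (G.deleteEdges {e, f}).Connected := by
  classical
  have hconn := (connected_deleteEdges_singleton_iff hG).mpr hb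
  have hsub : ↑(S.erase e) ⊆ (G.deleteEdges {e}).edgeSet := by
    rw [edgeSet_deleteEdges, Finset.coe_erase]
    exact Set.sdiff_subset_sdiff_left hS
  have hcard : ((S.erase e).card + 1 : ℕ∞) = S.card := by
    exact_mod_cast Finset.card_erase_add_one he
  have hpair (f : Sym2 V) : (G.deleteEdges {e}).IsBridge f ↔
      ¬ (G.deleteEdges {e, f}).Connected := by
    rw [← Set.singleton_union, ← deleteEdges_deleteEdges]
    exact (connected_deleteEdges_singleton_iff hconn).not_left.symm
  calc componentCount (G.deleteEdges S) = S.card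
      ↔ ∀ f ∈ S.erase e, (G.deleteEdges {e}).IsBridge f := by
        rw [← deleteEdges_singleton_deleteEdges_erase G he, ← hcard,
          componentCount_deleteEdges_eq_card_add_one_iff hconn hsub]
    _ ↔ ∀ f ∈ S, e ≠ f → ¬ (G.deleteEdges {e, f}).Connected := by
        simp only [hpair, Finset.mem_erase]
        grind

theorem isPDSet_iff_card_components_general (hG : G.Connected) (hS : ↑S ⊆ G.edgeSet)
    (h2 : 2 ≤ S.card) (hnb : ∃ e ∈ S, ¬ G.IsBridge e) :
    IsPDSet G S ↔ Nat.card (G.deleteEdges (↑S : Set (Sym2 V))).ConnectedComponent = S.card := by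
  rw [← componentCount_eq_natCast_iff (by lia)]
  constructor
  · rintro ⟨-, -, hdisc⟩
    obtain ⟨e, he, hb⟩ := hnb
    exact (componentCount_deleteEdges_eq_card_iff hG hS he hb).mpr (hdisc e he)
  · refine fun hcard ↦ ⟨hS, h2, fun e he f hf hef hconn ↦ ?_⟩
    have hb : ¬ G.IsBridge e := (connected_deleteEdges_singleton_iff hG).mp
      (hconn.mono (deleteEdges_anti (by simp)))
    exact (componentCount_deleteEdges_eq_card_iff hG hS he hb).mp hcard f hf hef hconn

end ComponentCount

/-- For a finite connected bridgeless simple graph `G` and `S ⊆ E` with `|S| ≥ 2`,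
`S` is a pairwise-disconnecting set iff deleting all edges of `S` leaves exactly `|S|`
connected components. -/
theorem isPDSet_iff_card_components {V : Type*} [Fintype V] [DecidableEq V]
    (G : SimpleGraph V) (hconn : G.Connected) (hbl : ∀ e : Sym2 V, ¬ G.IsBridge e)
    (S : Finset (Sym2 V)) (hS : ↑S ⊆ G.edgeSet) (h2 : 2 ≤ S.card) :
    IsPDSet G S ↔ Nat.card (G.deleteEdges (↑S : Set (Sym2 V))).ConnectedComponent = S.card := by
  obtain ⟨e, he⟩ : S.Nonempty := Finset.card_pos.mp (by lia)
  exact isPDSet_iff_card_components_general hconn hS h2 ⟨e, he, hbl e⟩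
end

section
/- Let G be a finite connected bridgeless simple graph with edge set E, and let S ⊆ E be a pairwise-disconnecting set of G. Then there exists a cycle of G that contains every edge of S. -/
open LaurentPolynomial Finset

/-!
Let `f` be a non-bridge of a connected graph `G`, so that `G - f` is connected. A cycle of `G`
avoiding `f` is a cycle of `G - f`, so none of its edges is a bridge of `G - f`, and deleting one of
them as well leaves the graph connected. Hence a cycle through one edge of a pairwise-disconnecting
set passes through all the others; such a cycle exists because that edge is not a bridge.
-/

section

variable {V : Type*} {G : SimpleGraph V} {e f : Sym2 V} {u : V} {c : G.Walk u u}

lemma connected_deleteEdges_singleton_of_not_isBridge (hG : G.Connected) (he : ¬ G.IsBridge e) :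
    (G.deleteEdges {e}).Connected := by
  induction e with
  | h x y => exact hG.connected_delete_edge_of_not_isBridge he

lemma exists_isCycle_mem_edges_of_not_isBridge (he : e ∈ G.edgeSet) (heb : ¬ G.IsBridge e) :
    ∃ (u : V) (c : G.Walk u u), c.IsCycle ∧ e ∈ c.edges := by
  simpa only [SimpleGraph.isBridge_iff_forall_cycle_notMem he, not_forall, exists_prop, not_not]
    using heb

lemma not_isBridge_deleteEdges_singleton_of_isCycle (hc : c.IsCycle) (he : e ∈ c.edges)
    (hf : f ∉ c.edges) : ¬ (G.deleteEdges {f}).IsBridge e := by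
  have avoids : ∀ e' ∈ c.edges, e' ∉ ({f} : Set (Sym2 V)) := by
    rintro _ hf' rfl
    exact hf hf'
  intro heb
  refine heb.notMem_edges_of_isCycle (hc.toDeleteEdges _ {f} avoids) ?_
  rwa [SimpleGraph.Walk.edges_transfer]

lemma connected_deleteEdges_pair_of_isCycle (hf : (G.deleteEdges {f}).Connected) (hc : c.IsCycle)
    (he : e ∈ c.edges) (hfc : f ∉ c.edges) : (G.deleteEdges {e, f}).Connected := by
  have h := connected_deleteEdges_singleton_of_not_isBridge hf
    (not_isBridge_deleteEdges_singleton_of_isCycle hc he hfc)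
  rwa [SimpleGraph.deleteEdges_deleteEdges, Set.singleton_union, Set.pair_comm] at h

theorem isPDSet_subset_cycle_general (hG : G.Connected) {S : Set (Sym2 V)} (hS : S ⊆ G.edgeSet)
    (hne : S.Nonempty) (hb : ∀ e ∈ S, ¬ G.IsBridge e)
    (hdis : S.Pairwise fun e f => ¬ (G.deleteEdges {e, f}).Connected) :
    ∃ (u : V) (c : G.Walk u u), c.IsCycle ∧ ∀ e ∈ S, e ∈ c.edges := by
  obtain ⟨e, he⟩ := hne
  obtain ⟨u, c, hc, hec⟩ := exists_isCycle_mem_edges_of_not_isBridge (hS he) (hb e he)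
  refine ⟨u, c, hc, fun f hf => ?_⟩
  by_contra hfc
  have hef : e ≠ f := ne_of_mem_of_not_mem hec hfc
  have hGf := connected_deleteEdges_singleton_of_not_isBridge hG (hb f hf)
  exact hdis he hf hef (connected_deleteEdges_pair_of_isCycle hGf hc hec hfc)

end

/-- Every pairwise-disconnecting set of a finite connected bridgeless simple graph lies
on a single cycle of the graph. -/
theorem isPDSet_subset_cycle {V : Type*} [Fintype V] [DecidableEq V]
    (G : SimpleGraph V) (hconn : G.Connected) (hbl : ∀ e : Sym2 V, ¬ G.IsBridge e)
    (S : Finset (Sym2 V)) (hS : IsPDSet G S) :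
    ∃ (u : V) (c : G.Walk u u), c.IsCycle ∧ ∀ e ∈ S, e ∈ c.edges := by
  obtain ⟨hSE, hcard, hdis⟩ := hS
  exact isPDSet_subset_cycle_general hconn hSE (Finset.card_pos.mp (two_pos.trans_le hcard))
    (fun e _ => hbl e) fun e he f hf => hdis e he f hf
end

section
/- Let G be a finite connected bridgeless simple graph. If S¹ and S² are two distinct maximal pairwise-disconnecting sets of G, then S¹ ∩ S² = ∅. -/
open LaurentPolynomial Finset

/-!
For distinct `e` and `g`, disconnecting `G` pairwise is transitive through an edge `f` that is not a
bridge. Suppose that `G - {e, f}` and `G - {f, g}` are disconnected but `G - {e, g}` is connected.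
Then `H = G - {e, f, g}` is disconnected, while `G - f` is connected, so one of `e`, `g` joins two
components of `H`. Since `H + f` is connected, `H` has only two components, and adding that edge to
`H` makes it connected; but the result is `G - {f, g}` or `G - {e, f}`, a contradiction.
Hence the union of two pairwise-disconnecting sets that share an edge which is not a bridge is again
pairwise-disconnecting, and by maximality both sets are equal to it.
-/

section Graph

variable {V : Type*} {G H : SimpleGraph V} {e f g : Sym2 V} {u v w x y : V}

lemma exists_adj_not_reachable_of_not_connected (hG : G.Connected) (hH : ¬ H.Connected) :
    ∃ u v, G.Adj u v ∧ ¬ H.Reachable u v := by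
  contrapose! hH
  refine { preconnected := fun u v => ?_, nonempty := hG.nonempty }
  simp only [SimpleGraph.reachable_iff_reflTransGen] at hH ⊢
  exact Relation.reflTransGen_closed hH u v ((G.reachable_iff_reflTransGen u v).1 (hG u v))

lemma reachable_deleteEdges_left_or_right (h : G.Reachable w x) :
    (G.deleteEdges {s(x, y)}).Reachable w x ∨ (G.deleteEdges {s(x, y)}).Reachable w y := by
  obtain ⟨p⟩ := h
  induction p with
  | nil => exact .inl .rfl
  | @cons a b x hab _ ih =>
    by_cases hxy : s(a, b) = s(x, y)
    · rcases Sym2.eq_iff.1 hxy with ⟨rfl, -⟩ | ⟨rfl, -⟩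
      · exact .inl .rfl
      · exact .inr .rfl
    · have hab' : (G.deleteEdges {s(x, y)}).Reachable a b :=
        (SimpleGraph.deleteEdges_adj.2 ⟨hab, hxy⟩).reachable
      exact ih.imp hab'.trans hab'.trans

lemma connected_of_deleteEdges_le_of_reachable (hG : G.Connected) (hle : G.deleteEdges {e} ≤ H)
    (hG' : ¬ (G.deleteEdges {e}).Reachable u v) (hH : H.Reachable u v) : H.Connected := by
  induction e with
  | h x y =>
    -- `G - xy` has at most two components, so every vertex lies in that of `u` or that of `v`.
    have reachable_u_or_v (w : V) : (G.deleteEdges {s(x, y)}).Reachable u w ∨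
        (G.deleteEdges {s(x, y)}).Reachable v w := by
      have side (z : V) := reachable_deleteEdges_left_or_right (y := y) (hG z x)
      rcases side u with hu | hu <;> rcases side v with hv | hv <;> rcases side w with hw | hw
      all_goals first
        | exact .inl (hu.trans hw.symm)
        | exact .inr (hv.trans hw.symm)
        | exact absurd (hu.trans hv.symm) hG'
    refine H.connected_iff_exists_forall_reachable.2 ⟨u, fun w => ?_⟩
    exact (reachable_u_or_v w).elim (.mono hle) fun hvw => hH.trans (hvw.mono hle)

/-- Two edges disconnect the graph jointly: the relation required between any two distinct members
of a pairwise-disconnecting set. The case `e = f` is not excluded. -/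
def IsDisconnectingPair (G : SimpleGraph V) (e f : Sym2 V) : Prop :=
  ¬ (G.deleteEdges {e, f}).Connected

namespace IsDisconnectingPair

instance : Std.Symm (IsDisconnectingPair G) where
  symm e f h := by rwa [IsDisconnectingPair, Set.pair_comm]

lemma trans (hf : ¬ G.IsBridge f) (hef : IsDisconnectingPair G e f)
    (hfg : IsDisconnectingPair G f g) (heg : e ≠ g) : IsDisconnectingPair G e g := by
  intro hconn
  have hG_f : (G.deleteEdges {f}).Connected := by
    induction f with
    | h x y => exact (hconn.mono (G.deleteEdges_le _)).connected_delete_edge_of_not_isBridge hf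
  let H := (G.deleteEdges {e, g}).deleteEdges {f}
  have hH_eq : H = G.deleteEdges ({e, g} ∪ {f}) := G.deleteEdges_deleteEdges _ _
  have hH_ef : H ≤ G.deleteEdges {e, f} := hH_eq ▸ SimpleGraph.deleteEdges_anti (by grind)
  have hH_fg : H ≤ G.deleteEdges {f, g} := hH_eq ▸ SimpleGraph.deleteEdges_anti (by grind)
  obtain ⟨a, b, hab, hHab⟩ :=
    exists_adj_not_reachable_of_not_connected hG_f fun h => hef (h.mono hH_ef)
  obtain ⟨hGab, hab_f⟩ := SimpleGraph.deleteEdges_adj.1 hab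
  -- The edge `ab` can replace `f` in `G - {e, g}`, and it survives in one of the two cuts.
  by_cases hab_e : s(a, b) = e
  · have hab_fg : (G.deleteEdges {f, g}).Adj a b := by simp_all
    exact hfg (connected_of_deleteEdges_le_of_reachable hconn hH_fg hHab hab_fg.reachable)
  · have hab_ef : (G.deleteEdges {e, f}).Adj a b := by simp_all
    exact hef (connected_of_deleteEdges_le_of_reachable hconn hH_ef hHab hab_ef.reachable)

end IsDisconnectingPair

lemma isPDSet_iff_pairwise {S : Finset (Sym2 V)} :
    IsPDSet G S ↔
      ↑S ⊆ G.edgeSet ∧ 2 ≤ S.card ∧ (S : Set (Sym2 V)).Pairwise (IsDisconnectingPair G) :=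
  .rfl

lemma IsPDSet.union [DecidableEq V] {S T : Finset (Sym2 V)} (hS : IsPDSet G S) (hT : IsPDSet G T)
    (heS : e ∈ S) (heT : e ∈ T) (he : ¬ G.IsBridge e) : IsPDSet G (S ∪ T) := by
  rw [isPDSet_iff_pairwise] at hS hT ⊢
  obtain ⟨hS_sub, hS_card, hS_pair⟩ := hS
  obtain ⟨hT_sub, -, hT_pair⟩ := hT
  rw [Finset.coe_union, Set.pairwise_union_of_symm]
  refine ⟨Set.union_subset hS_sub hT_sub, hS_card.trans (Finset.card_le_card subset_union_left),
    hS_pair, hT_pair, fun a ha b hb hab => ?_⟩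
  rcases eq_or_ne a e with rfl | hae
  · exact hT_pair heT hb hab
  rcases eq_or_ne e b with rfl | heb
  · exact hS_pair ha heS hab
  exact .trans he (hS_pair ha heS hae) (hT_pair heT hb heb) hab

theorem maximal_pdsets_disjoint_general {S₁ S₂ : Finset (Sym2 V)} (h₁ : IsMaxPDSet G S₁)
    (h₂ : IsMaxPDSet G S₂) (hne : S₁ ≠ S₂) (he₁ : e ∈ S₁) (he₂ : e ∈ S₂) : G.IsBridge e := by
  classical
  by_contra he
  have h_union : IsPDSet G (S₁ ∪ S₂) := h₁.1.union h₂.1 he₁ he₂ he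
  have h_eq₁ : S₁ ∪ S₂ = S₁ := h₁.2 _ h_union subset_union_left
  have h_eq₂ : S₁ ∪ S₂ = S₂ := h₂.2 _ h_union subset_union_right
  exact hne (h_eq₁.symm.trans h_eq₂)

end Graph

/-- Two distinct maximal pairwise-disconnecting sets of a finite connected bridgeless
simple graph are disjoint. -/
theorem maximal_pdsets_disjoint {V : Type*} [Fintype V] [DecidableEq V]
    (G : SimpleGraph V) (hconn : G.Connected) (hbl : ∀ e : Sym2 V, ¬ G.IsBridge e)
    (S₁ S₂ : Finset (Sym2 V)) (h₁ : IsMaxPDSet G S₁) (h₂ : IsMaxPDSet G S₂)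
    (hne : S₁ ≠ S₂) : S₁ ∩ S₂ = ∅ := by
  refine Finset.disjoint_iff_inter_eq_empty.1 (Finset.disjoint_left.2 fun e he₁ he₂ => hbl e ?_)
  exact maximal_pdsets_disjoint_general h₁ h₂ hne he₁ he₂
end

section
/- Let G be a finite connected bridgeless simple graph and let e be an edge of G with endpoints u and v. If the graph G − e obtained by deleting e has a bridge, then u and v have at most one common neighbor in G, i.e., |N(u) ∩ N(v)| ≤ 1. -/
open Finset

/-!
Suppose `u` and `v` have two common neighbors. These give two edge-disjoint paths from `u` to `v` in
`G - uv`, so after deleting any further edge `f` one of the paths survives and can replace the edge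
`uv` in every walk of `G - f`. Hence deleting `uv` turns no edge of `G` into a bridge.
-/

section

open SimpleGraph

variable {V : Type*} {G H : SimpleGraph V} {u v x y : V} {e f : Sym2 V}

theorem reachable_le_of_adj_le_reachable (hGH : G.Adj ≤ H.Reachable) :
    G.Reachable ≤ H.Reachable := by
  rw [reachable_eq_reflTransGen]
  exact Relation.reflTransGen_le_of_equivalence_of_le H.reachable_is_equivalence hGH

theorem reachable_deleteEdges_singleton_iff_of_not_isBridge (he : ¬ G.IsBridge e) :
    (G.deleteEdges {e}).Reachable x y ↔ G.Reachable x y := by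
  refine ⟨fun h ↦ h.mono (deleteEdges_le _),
    fun h ↦ reachable_le_of_adj_le_reachable (fun a b hab ↦ ?_) x y h⟩
  by_cases heq : s(a, b) = e
  · subst heq
    exact not_not.mp he
  · exact (deleteEdges_adj.mpr ⟨hab, heq⟩).reachable

theorem isBridge_deleteEdges_singleton_iff_of_isEdgeReachable_two
    (huv : (G.deleteEdges {s(u, v)}).IsEdgeReachable 2 u v) :
    (G.deleteEdges {s(u, v)}).IsBridge f ↔ G.IsBridge f := by
  induction f with | h a b
  have hcomm : (G.deleteEdges {s(u, v)}).deleteEdges {s(a, b)} =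
      (G.deleteEdges {s(a, b)}).deleteEdges {s(u, v)} := by
    rw [deleteEdges_deleteEdges, deleteEdges_deleteEdges, Set.union_comm]
  have huv_not_bridge : ¬ (G.deleteEdges {s(a, b)}).IsBridge s(u, v) := by
    rw [isBridge_iff, not_not, ← hcomm]
    exact isEdgeReachable_two.mp huv s(a, b)
  rw [isBridge_iff, isBridge_iff, hcomm,
    reachable_deleteEdges_singleton_iff_of_not_isBridge huv_not_bridge]

/- A cut separating `u` from `v` meets the path `u w v` of each common neighbor `w`, and an edge of
that path determines `w`; so the cut has at least as many edges as there are common neighbors. -/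
theorem isEdgeReachable_of_le_encard_commonNeighbors {k : ℕ}
    (hk : k ≤ (G.commonNeighbors u v).encard) : G.IsEdgeReachable k u v := by
  classical
  intro s hs
  by_contra hsep
  have hcut : ∀ w ∈ G.commonNeighbors u v, s(u, w) ∈ s ∨ s(v, w) ∈ s := by
    intro w hw
    rw [mem_commonNeighbors] at hw
    by_contra! havoid
    have huw : (G.deleteEdges s).Adj u w := deleteEdges_adj.mpr ⟨hw.1, havoid.1⟩
    have hvw : (G.deleteEdges s).Adj v w := deleteEdges_adj.mpr ⟨hw.2, havoid.2⟩
    exact hsep (huw.reachable.trans hvw.symm.reachable)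
  let cutEdge (w : V) : Sym2 V := if s(u, w) ∈ s then s(u, w) else s(v, w)
  have hmaps : Set.MapsTo cutEdge (G.commonNeighbors u v) s := by
    intro w hw
    grind
  have hinj : Set.InjOn cutEdge (G.commonNeighbors u v) := by
    intro w hw w' hw' heq
    have := hw.1.ne
    have := hw.2.ne
    grind
  exact (hk.trans (Set.encard_le_encard_of_injOn hmaps hinj)).not_gt hs

theorem commonNeighbors_deleteEdges_singleton :
    (G.deleteEdges {s(u, v)}).commonNeighbors u v = G.commonNeighbors u v := by
  ext w
  simp only [mem_commonNeighbors, deleteEdges_adj, Set.mem_singleton_iff]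
  refine ⟨fun h ↦ ⟨h.1.1, h.2.1⟩, fun ⟨huw, hvw⟩ ↦ ?_⟩
  have := huw.ne
  have := hvw.ne
  grind

theorem common_neighbors_le_one_of_bridge_general
    (hbridge : (G.deleteEdges {s(u, v)}).IsBridge f) (hf : ¬ G.IsBridge f) :
    (G.commonNeighbors u v).Subsingleton := by
  by_contra hnontrivial
  have hcard : ((2 : ℕ) : ℕ∞) ≤ ((G.deleteEdges {s(u, v)}).commonNeighbors u v).encard := by
    rw [commonNeighbors_deleteEdges_singleton]
    exact Order.add_one_le_of_lt
      (Set.one_lt_encard_iff_nontrivial.mpr (Set.not_subsingleton_iff.mp hnontrivial))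
  have huv := isEdgeReachable_of_le_encard_commonNeighbors hcard
  exact hf ((isBridge_deleteEdges_singleton_iff_of_isEdgeReachable_two huv).mp hbridge)

end

/-- Let `G` be a finite connected bridgeless simple graph and let `e = s(u,v)` be an edge
of `G`. If `G - e` has a bridge, then `u` and `v` have at most one common neighbor. -/
theorem common_neighbors_le_one_of_bridge {V : Type*} [Fintype V] [DecidableEq V]
    (G : SimpleGraph V) [DecidableRel G.Adj]
    (hconn : G.Connected) (hbl : ∀ g : Sym2 V, ¬ G.IsBridge g)
    (u v : V) (hadj : G.Adj u v)
    (hbridge : ∃ f : Sym2 V, (G.deleteEdges {s(u, v)}).IsBridge f) :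
    (G.neighborFinset u ∩ G.neighborFinset v).card ≤ 1 := by
  obtain ⟨f, hf⟩ := hbridge
  rw [Finset.card_le_one_iff_subsingleton, coe_inter, SimpleGraph.coe_neighborFinset,
    SimpleGraph.coe_neighborFinset]
  exact common_neighbors_le_one_of_bridge_general hf (hbl f)
end
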